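/- arXiv:2111.05361 — 2 statements merged into one kernel-verified Lean document; each statement's English description precedes it below -/
import Mathlib

section
/- Let k, λ > 0, let D ⊂ ℝ³ be a bounded set, and let v : ℝ³ → ℝ be a bounded measurable function with support contained in D. Then the Yukawa potential w(x) := ∫_{ℝ³} k·e^{−λ‖x−y‖}/‖x−y‖ · v(y) dy is continuously differentiable on ℝ³, its gradient is given by differentiation under the integral sign, ∇w(x) = ∫_{ℝ³} ∇_x G(x−y; k, λ) v(y) dy, and ∇w is bounded with ‖∇w(x)‖ ≤ (8πk/λ)·sup|v| for all x ∈ ℝ³; that is, w ∈ C¹_b(ℝ³; ℝ). -/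
open MeasureTheory

local notation "E3" => EuclideanSpace ℝ (Fin 3)

noncomputable def ykS (e : ℝ) (x : E3) : ℝ := Real.sqrt (‖x‖ ^ 2 + e ^ 2)

noncomputable def ykG (k l e : ℝ) (x : E3) : ℝ := k * Real.exp (-l * ykS e x) / ykS e x

noncomputable def ykH (k l e : ℝ) (x : E3) : E3 :=
  (-(k * Real.exp (-l * ykS e x) * (1 + l * ykS e x) / ykS e x ^ 3)) • x

noncomputable def ykh (k l r : ℝ) : ℝ := k * Real.exp (-l * r) * (1 + l * r) / r ^ 2

lemma ykS_zero (x : E3) : ykS 0 x = ‖x‖ := by simp [ykS]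

lemma ykS_nonneg (e : ℝ) (x : E3) : 0 ≤ ykS e x := Real.sqrt_nonneg _

lemma ykS_sq (e : ℝ) (x : E3) : ykS e x ^ 2 = ‖x‖ ^ 2 + e ^ 2 := Real.sq_sqrt (by positivity)

lemma ykS_pos {e : ℝ} (he : 0 < e) (x : E3) : 0 < ykS e x := Real.sqrt_pos.2 (by positivity)

lemma le_ykS (e : ℝ) (x : E3) : ‖x‖ ≤ ykS e x := Real.le_sqrt_of_sq_le (by nlinarith [sq_nonneg e])

lemma le_ykS' (e : ℝ) (x : E3) : e ≤ ykS e x :=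
  Real.le_sqrt_of_sq_le (by nlinarith [sq_nonneg ‖x‖])

lemma ykS_cont (e : ℝ) : Continuous (ykS e) := by unfold ykS; fun_prop

lemma ykG_meas (k l e : ℝ) : Measurable (ykG k l e) := by
  have := (ykS_cont e).measurable
  unfold ykG; fun_prop

lemma ykH_meas (k l e : ℝ) : Measurable (ykH k l e) := by
  have := (ykS_cont e).measurable
  unfold ykH; fun_prop

lemma yk_mono {r t : ℝ} (hr : 0 ≤ r) (h : r ≤ t) :
    Real.exp (-t) * (1 + t) ≤ Real.exp (-r) * (1 + r) := by
  have h1 := Real.add_one_le_exp (t - r)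
  have h2 : Real.exp (-r) = Real.exp (-t) * Real.exp (t - r) := by
    rw [← Real.exp_add]; congr 1; ring
  rw [h2, mul_assoc]
  apply mul_le_mul_of_nonneg_left _ (Real.exp_pos _).le
  nlinarith [mul_nonneg hr (sub_nonneg.2 h)]

lemma ykH_norm {k l : ℝ} (hk : 0 < k) (hl : 0 < l) (e : ℝ) (x : E3) :
    ‖ykH k l e x‖ = k * Real.exp (-l * ykS e x) * (1 + l * ykS e x) / ykS e x ^ 3 * ‖x‖ := by
  have := ykS_nonneg e x
  rw [ykH, norm_smul, norm_neg, Real.norm_of_nonneg (by positivity)]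

lemma ykH_le {k l : ℝ} (hk : 0 < k) (hl : 0 < l) (e : ℝ) (x : E3) :
    ‖ykH k l e x‖ ≤ ykh k l ‖x‖ := by
  rw [ykH_norm hk hl, ykh]
  rcases (norm_nonneg x).eq_or_lt with h | h
  · simp [← h]
  have hs := le_ykS e x
  have hs0 : 0 < ykS e x := h.trans_le hs
  have hm := yk_mono (r := l * ‖x‖) (t := l * ykS e x) (by positivity) (by gcongr)
  rw [div_mul_eq_mul_div, div_le_div_iff₀ (by positivity) (by positivity)]
  have e1 : ‖x‖ ^ 3 ≤ ykS e x ^ 3 := by gcongr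
  have := mul_le_mul hm e1 (by positivity) (by positivity)
  have := mul_le_mul_of_nonneg_left this hk.le
  simp only [neg_mul]
  linarith

lemma ykH_le' {k l e : ℝ} (hk : 0 < k) (hl : 0 < l) (he : 0 < e) (x : E3) :
    ‖ykH k l e x‖ ≤ k / e ^ 2 := by
  rw [ykH_norm hk hl]
  have hs := le_ykS e x
  have hs' := le_ykS' e x
  have hs0 := ykS_pos he x
  have hm := yk_mono (r := 0) (t := l * ykS e x) le_rfl (by positivity)
  simp only [neg_zero, Real.exp_zero, add_zero, mul_one] at hm
  rw [div_mul_eq_mul_div, div_le_div_iff₀ (by positivity) (by positivity)]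
  have e1 : ‖x‖ * e ^ 2 ≤ ykS e x * ykS e x ^ 2 := by gcongr
  have := mul_le_mul hm e1 (by positivity) (by positivity)
  have := mul_le_mul_of_nonneg_left this hk.le
  simp only [neg_mul]
  linarith

lemma ykG_le {k l : ℝ} (hk : 0 < k) (hl : 0 < l) {e : ℝ} (x : E3) (hx : x ≠ 0) :
    ‖ykG k l e x‖ ≤ ykG k l 0 x := by
  have hs := le_ykS e x
  have h := norm_pos_iff.2 hx
  have hs0 : 0 < ykS e x := h.trans_le hs
  rw [ykG, ykG, ykS_zero, Real.norm_of_nonneg (by positivity)]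
  simp only [neg_mul]
  gcongr

lemma ykG_hasFDerivAt {k l e : ℝ} (he : 0 < e) (x : E3) :
    HasFDerivAt (ykG k l e) (innerSL ℝ (ykH k l e x)) x := by
  have hs0 := ykS_pos he x
  have h1 : HasFDerivAt (fun x : E3 => ‖x‖ ^ 2 + e ^ 2) (2 • innerSL ℝ x) x :=
    (hasStrictFDerivAt_norm_sq x).hasFDerivAt.add_const _
  have h2 : HasFDerivAt (ykS e) _ x := h1.sqrt (by positivity)
  have h3 : HasDerivAt (fun s : ℝ => k * Real.exp (-l * s) / s) _ (ykS e x) :=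
    ((((hasDerivAt_id (ykS e x)).const_mul (-l)).exp).const_mul k).div
      (hasDerivAt_id (ykS e x)) hs0.ne'
  have h4 := h3.comp_hasFDerivAt x h2
  refine h4.congr_fderiv ?_
  ext y
  have : √(‖x‖ ^ 2 + e ^ 2) = ykS e x := rfl
  simp [ykH, this]
  field_simp
  ring

lemma yk_radial_aux {l : ℝ} (hl : 0 < l) :
    IntegrableOn (fun r : ℝ => Real.exp (-l * r) * (1 + l * r)) (Set.Ioi 0) ∧
    ∫ r in Set.Ioi (0:ℝ), Real.exp (-l * r) * (1 + l * r) = 2 / l := by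
  have hd : ∀ x ∈ Set.Ici (0:ℝ), HasDerivAt (fun r : ℝ => -((r + 2 / l) * Real.exp (-l * r)))
      (Real.exp (-l * x) * (1 + l * x)) x := by
    intro x _
    have := (((hasDerivAt_id x).add_const (2 / l)).mul
      (((hasDerivAt_id x).const_mul (-l)).exp)).neg
    refine this.congr_deriv ?_
    simp
    field_simp
    ring
  have hp : ∀ x ∈ Set.Ioi (0:ℝ), 0 ≤ Real.exp (-l * x) * (1 + l * x) := by
    intro x hx
    have : 0 < x := hx
    positivity
  have ht : Filter.Tendsto (fun r : ℝ => -((r + 2 / l) * Real.exp (-l * r))) Filter.atTop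
      (nhds 0) := by
    have a1 := Real.tendsto_pow_mul_exp_neg_atTop_nhds_zero 1
    have a0 := Real.tendsto_pow_mul_exp_neg_atTop_nhds_zero 0
    have hlin : Filter.Tendsto (fun r : ℝ => l * r) Filter.atTop Filter.atTop :=
      Filter.tendsto_id.const_mul_atTop hl
    have := (((a1.comp hlin).const_mul (1 / l)).add ((a0.comp hlin).const_mul (2 / l))).neg
    simp only [mul_zero, add_zero, neg_zero] at this
    refine this.congr fun r => ?_
    simp
    field_simp
    ring
  refine ⟨integrableOn_Ioi_deriv_of_nonneg' hd hp ht, ?_⟩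
  rw [integral_Ioi_of_hasDerivAt_of_nonneg' hd hp ht]
  simp

lemma ykh_integrable {k l : ℝ} (hl : 0 < l) :
    Integrable (fun x : E3 => ykh k l ‖x‖) := by
  rw [integrable_fun_norm_addHaar (μ := (volume : Measure E3)) (f := ykh k l)]
  refine IntegrableOn.congr_fun ((yk_radial_aux hl).1.const_mul k) ?_ measurableSet_Ioi
  intro r hr
  have : r ≠ 0 := ne_of_gt hr
  simp [ykh]
  field_simp

lemma ykh_integral {k l : ℝ} (hl : 0 < l) :
    ∫ x : E3, ykh k l ‖x‖ = 8 * Real.pi * k / l := by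
  rw [integral_fun_norm_addHaar (volume : Measure E3) (ykh k l)]
  have : ∫ r in Set.Ioi (0:ℝ), r ^ (Module.finrank ℝ E3 - 1) • ykh k l r
      = ∫ r in Set.Ioi (0:ℝ), k * (Real.exp (-l * r) * (1 + l * r)) := by
    refine setIntegral_congr_fun measurableSet_Ioi ?_
    intro r hr
    have : r ≠ 0 := ne_of_gt hr
    simp [ykh]
    field_simp
  rw [this, integral_const_mul, (yk_radial_aux hl).2, Measure.real,
    EuclideanSpace.volume_ball_fin_three]
  have hp : (0:ℝ) ≤ Real.pi * 4 / 3 := by positivity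
  simp [ENNReal.toReal_ofReal hp]
  ring

lemma ykG0_integrable {k l : ℝ} (hk : 0 < k) (hl : 0 < l) :
    Integrable (fun x : E3 => ykG k l 0 x) := by
  have : (fun x : E3 => ykG k l 0 x) = fun x => (fun r => k * Real.exp (-l * r) / r) ‖x‖ := by
    funext x; simp [ykG, ykS_zero]
  rw [this, integrable_fun_norm_addHaar (μ := (volume : Measure E3)) (f := fun r => k * Real.exp (-l * r) / r)]
  refine Integrable.mono' ((yk_radial_aux hl).1.const_mul (k / l))
    (by apply Measurable.aestronglyMeasurable; fun_prop) ?_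
  filter_upwards [ae_restrict_mem measurableSet_Ioi] with r hr
  have hr : 0 < r := hr
  rw [Real.norm_of_nonneg (by positivity)]
  simp
  have : r ^ 2 * (k * Real.exp (-(l * r)) / r) = k / l * (Real.exp (-(l * r)) * (l * r)) := by
    field_simp
  rw [this]
  gcongr
  linarith

lemma ykS_tendsto (x : E3) (u : ℕ → ℝ) (hu : Filter.Tendsto u Filter.atTop (nhds 0)) :
    Filter.Tendsto (fun n => ykS (u n) x) Filter.atTop (nhds (ykS 0 x)) := by
  have : Continuous (fun e => ykS e x) := by unfold ykS; fun_prop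
  exact (this.tendsto 0).comp hu

lemma ykG_tendsto {k l : ℝ} (x : E3) (hx : x ≠ 0) (u : ℕ → ℝ)
    (hu : Filter.Tendsto u Filter.atTop (nhds 0)) :
    Filter.Tendsto (fun n => ykG k l (u n) x) Filter.atTop (nhds (ykG k l 0 x)) := by
  have h := ykS_tendsto x u hu
  have h0 : ykS 0 x ≠ 0 := by simpa [ykS_zero] using hx
  exact ((h.const_mul (-l)).rexp.const_mul k).div h h0

lemma ykH_tendsto {k l : ℝ} (x : E3) (hx : x ≠ 0) (u : ℕ → ℝ)
    (hu : Filter.Tendsto u Filter.atTop (nhds 0)) :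
    Filter.Tendsto (fun n => ykH k l (u n) x) Filter.atTop (nhds (ykH k l 0 x)) := by
  have h := ykS_tendsto x u hu
  have h0 : ykS 0 x ≠ 0 := by simpa [ykS_zero] using hx
  exact ((((h.const_mul (-l)).rexp.const_mul k).mul ((h.const_mul l).const_add 1)).div
    (h.pow 3) (pow_ne_zero 3 h0)).neg.smul_const x

lemma ykH_cont {k l e : ℝ} (he : 0 < e) : Continuous (ykH k l e) := by
  have := ykS_cont e
  unfold ykH
  have h : Continuous fun x : E3 =>
      k * Real.exp (-l * ykS e x) * (1 + l * ykS e x) / ykS e x ^ 3 :=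
    Continuous.div (by fun_prop) (by fun_prop) (fun x => pow_ne_zero 3 (ykS_pos he x).ne')
  exact h.neg.smul continuous_id

section
variable {k l M : ℝ} {v : E3 → ℝ}

lemma yk_int_vH (hk : 0 < k) (hl : 0 < l) (hv : Measurable v) (hM : ∀ y, |v y| ≤ M)
    (e : ℝ) (x : E3) : Integrable (fun y => v y • ykH k l e (x - y)) := by
  have hH := ykH_meas k l e
  refine Integrable.mono' (((ykh_integrable (k := k) hl).comp_sub_left x).const_mul M)
    (by apply Measurable.aestronglyMeasurable; fun_prop) (Filter.Eventually.of_forall fun y => ?_)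
  rw [norm_smul]
  have := (abs_nonneg _).trans (hM y)
  exact mul_le_mul (hM y) (ykH_le hk hl e _) (norm_nonneg _) this

lemma yk_bound (hk : 0 < k) (hl : 0 < l) (hM : ∀ y, |v y| ≤ M)
    (e : ℝ) (x : E3) : ‖∫ y, v y • ykH k l e (x - y)‖ ≤ 8 * Real.pi * k / l * M := by
  have h := norm_integral_le_of_norm_le (f := fun y => v y • ykH k l e (x - y))
    (((ykh_integrable (k := k) hl).comp_sub_left x).const_mul M)
    (Filter.Eventually.of_forall fun y => by
      rw [norm_smul]
      have := (abs_nonneg _).trans (hM y)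
      exact mul_le_mul (hM y) (ykH_le hk hl e _) (norm_nonneg _) this)
  rwa [integral_const_mul, integral_sub_left_eq_self (fun z : E3 => ykh k l ‖z‖) volume x,
    ykh_integral hl, mul_comm] at h

lemma yk_unif (hk : 0 < k) (hl : 0 < l) (hv : Measurable v) (hM : ∀ y, |v y| ≤ M)
    (u : ℕ → ℝ) (hu : Filter.Tendsto u Filter.atTop (nhds 0)) :
    TendstoUniformly (fun n x => ∫ y, v y • ykH k l (u n) (x - y))
      (fun x => ∫ y, v y • ykH k l 0 (x - y)) Filter.atTop := by
  have hb : ∀ n (z : E3), ‖ykH k l (u n) z - ykH k l 0 z‖ ≤ 2 * ykh k l ‖z‖ := fun n z => by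
    have := norm_sub_le (ykH k l (u n) z) (ykH k l 0 z)
    linarith [ykH_le hk hl (u n) z, ykH_le hk hl 0 z]
  have hm : ∀ n, AEStronglyMeasurable (fun z : E3 => ‖ykH k l (u n) z - ykH k l 0 z‖) := fun n => by
    have h1 := ykH_meas k l (u n)
    have h2 := ykH_meas k l 0
    exact Measurable.aestronglyMeasurable (by fun_prop)
  have hbi := (ykh_integrable (k := k) hl).const_mul 2
  have hi : ∀ n, Integrable (fun z : E3 => ‖ykH k l (u n) z - ykH k l 0 z‖) := fun n =>
    hbi.mono' (hm n) (Filter.Eventually.of_forall fun z => by simpa using hb n z)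
  have hD : Filter.Tendsto (fun n => ∫ z : E3, ‖ykH k l (u n) z - ykH k l 0 z‖) Filter.atTop
      (nhds (∫ z : E3, (0:ℝ))) := by
    refine tendsto_integral_of_dominated_convergence _ hm hbi
      (fun n => Filter.Eventually.of_forall fun z => by simpa using hb n z) ?_
    filter_upwards [compl_mem_ae_iff.2 (measure_singleton (0 : E3))] with z hz
    have := ((ykH_tendsto (k := k) (l := l) z hz u hu).sub_const (ykH k l 0 z)).norm
    simpa using this
  have hD2 := hD.const_mul M
  simp only [integral_zero, mul_zero] at hD2
  rw [Metric.tendstoUniformly_iff]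
  intro ε hε
  filter_upwards [hD2.eventually (gt_mem_nhds hε)] with n hn x
  refine lt_of_le_of_lt ?_ hn
  rw [dist_comm, dist_eq_norm, ← integral_sub (yk_int_vH hk hl hv hM _ _) (yk_int_vH hk hl hv hM _ _),
    ← integral_const_mul,
    ← integral_sub_left_eq_self (fun z : E3 => M * ‖ykH k l (u n) z - ykH k l 0 z‖) volume x]
  refine norm_integral_le_of_norm_le (((hi n).comp_sub_left x).const_mul M)
    (Filter.Eventually.of_forall fun y => ?_)
  rw [← smul_sub, norm_smul]
  exact mul_le_mul_of_nonneg_right (hM y) (norm_nonneg _)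

lemma yk_int_vG {e : ℝ} (hk : 0 < k) (hl : 0 < l) (hv : Measurable v) (hM : ∀ y, |v y| ≤ M)
    (x : E3) : (∀ᵐ y, ‖ykG k l e (x - y) * v y‖ ≤ M * ykG k l 0 (x - y)) ∧
    Integrable (fun y => ykG k l e (x - y) * v y) := by
  have h1 : ∀ᵐ y, ‖ykG k l e (x - y) * v y‖ ≤ M * ykG k l 0 (x - y) := by
    filter_upwards [compl_mem_ae_iff.2 (measure_singleton x)] with y hy
    have hy : x - y ≠ 0 := sub_ne_zero.2 (Ne.symm hy)
    rw [norm_mul, mul_comm]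
    have := (abs_nonneg _).trans (hM y)
    exact mul_le_mul (hM y) (ykG_le hk hl _ hy) (norm_nonneg _) this
  refine ⟨h1, ?_⟩
  have := ykG_meas k l e
  exact (((ykG0_integrable hk hl).comp_sub_left x).const_mul M).mono'
    (by apply Measurable.aestronglyMeasurable; fun_prop) h1

lemma yk_ptwise (hk : 0 < k) (hl : 0 < l) (hv : Measurable v) (hM : ∀ y, |v y| ≤ M)
    (u : ℕ → ℝ) (hu : Filter.Tendsto u Filter.atTop (nhds 0)) (x : E3) :
    Filter.Tendsto (fun n => ∫ y, ykG k l (u n) (x - y) * v y) Filter.atTop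
      (nhds (∫ y, ykG k l 0 (x - y) * v y)) := by
  refine tendsto_integral_of_dominated_convergence _
    (fun n => (yk_int_vG hk hl hv hM x).2.aestronglyMeasurable)
    (((ykG0_integrable hk hl).comp_sub_left x).const_mul M)
    (fun n => (yk_int_vG hk hl hv hM x).1) ?_
  filter_upwards [compl_mem_ae_iff.2 (measure_singleton x)] with y hy
  have hy : x - y ≠ 0 := sub_ne_zero.2 (Ne.symm hy)
  exact (ykG_tendsto _ hy u hu).mul_const _

lemma yk_reg_deriv {e : ℝ} (he : 0 < e) (hk : 0 < k) (hl : 0 < l) (hv : Measurable v)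
    (hM : ∀ y, |v y| ≤ M) (hvi : Integrable v) (x : E3) :
    HasFDerivAt (fun x => ∫ y, ykG k l e (x - y) * v y)
      (innerSL ℝ (∫ y, v y • ykH k l e (x - y))) x := by
  rw [← (innerSL ℝ (E := E3)).integral_comp_comm (yk_int_vH hk hl hv hM e x)]
  refine hasFDerivAt_integral_of_dominated_of_fderiv_le (s := Set.univ)
    (F' := fun x y => innerSL ℝ (v y • ykH k l e (x - y)))
    (bound := fun y => |v y| * (k / e ^ 2)) Filter.univ_mem
    (Filter.Eventually.of_forall fun x => (yk_int_vG hk hl hv hM x).2.aestronglyMeasurable)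
    (yk_int_vG hk hl hv hM x).2
    ((innerSL ℝ (E := E3)).continuous.comp_aestronglyMeasurable
      (yk_int_vH hk hl hv hM e x).aestronglyMeasurable)
    (Filter.Eventually.of_forall fun y x _ => ?_) (hvi.abs.mul_const _)
    (Filter.Eventually.of_forall fun y x _ => ?_)
  · rw [innerSL_apply_norm, norm_smul]
    exact mul_le_mul_of_nonneg_left (ykH_le' hk hl he _) (norm_nonneg _)
  · have h := (ykG_hasFDerivAt (k := k) (l := l) he (x - y)).comp x
      ((hasFDerivAt_id x).sub_const y)
    refine (h.mul_const (v y)).congr_fderiv ?_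
    ext z
    simp

lemma yk_reg_cont {e : ℝ} (he : 0 < e) (hk : 0 < k) (hl : 0 < l) (hv : Measurable v)
    (hM : ∀ y, |v y| ≤ M) (hvi : Integrable v) :
    Continuous (fun x => ∫ y, v y • ykH k l e (x - y)) := by
  refine continuous_of_dominated (bound := fun y => |v y| * (k / e ^ 2))
    (fun x => (yk_int_vH hk hl hv hM e x).aestronglyMeasurable)
    (fun x => Filter.Eventually.of_forall fun y => ?_) (hvi.abs.mul_const _)
    (Filter.Eventually.of_forall fun y => ?_)
  · rw [norm_smul]
    exact mul_le_mul_of_nonneg_left (ykH_le' hk hl he _) (norm_nonneg _)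
  · have := ykH_cont (k := k) (l := l) he
    fun_prop

lemma yk_main (hk : 0 < k) (hl : 0 < l) (hv : Measurable v)
    (hM : ∀ y, |v y| ≤ M) (hvi : Integrable v) :
    Continuous (fun x => ∫ y, v y • ykH k l 0 (x - y)) ∧ ∀ x,
    HasFDerivAt (fun x => ∫ y, ykG k l 0 (x - y) * v y)
      (innerSL ℝ (∫ y, v y • ykH k l 0 (x - y))) x := by
  have hu := tendsto_one_div_add_atTop_nhds_zero_nat (𝕜 := ℝ)
  have hup : ∀ n : ℕ, 0 < 1 / ((n : ℝ) + 1) := fun n => by positivity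
  have hU := yk_unif hk hl hv hM _ hu
  refine ⟨hU.continuous (Filter.Eventually.frequently
    (Filter.Eventually.of_forall fun n => yk_reg_cont (hup n) hk hl hv hM hvi)), ?_⟩
  refine hasFDerivAt_of_tendstoUniformly (l := Filter.atTop)
    (f := fun (n : ℕ) x => ∫ y, ykG k l (1 / ((n : ℝ) + 1)) (x - y) * v y)
    (f' := fun (n : ℕ) x => innerSL ℝ (∫ y, v y • ykH k l (1 / ((n : ℝ) + 1)) (x - y)))
    (g' := fun x => innerSL ℝ (∫ y, v y • ykH k l 0 (x - y))) ?_
    (fun n x => yk_reg_deriv (hup n) hk hl hv hM hvi x)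
    (yk_ptwise hk hl hv hM _ hu)
  exact (innerSL ℝ (E := E3)).uniformContinuous.comp_tendstoUniformly hU

end


/-- For `k, λ > 0`, `D ⊂ ℝ³` bounded, and `v` bounded measurable supported in `D`,
the Yukawa potential `w(x) = ∫ k e^{−λ‖x−y‖}/‖x−y‖ · v(y) dy` is continuously
differentiable with gradient obtained by differentiating under the integral sign,
`∇w(x) = ∫ ∇ₓG(x−y) v(y) dy`, and `‖∇w(x)‖ ≤ (8πk/λ)·sup|v|`;
that is, `w ∈ C¹_b(ℝ³; ℝ)`. -/
theorem yukawa_potential_C1b (k lam : ℝ) (hk : 0 < k) (hlam : 0 < lam)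
    (D : Set (EuclideanSpace ℝ (Fin 3))) (hD : Bornology.IsBounded D)
    (v : EuclideanSpace ℝ (Fin 3) → ℝ) (hv : Measurable v)
    (M : ℝ) (hM : ∀ y, |v y| ≤ M)
    (hsupp : Function.support v ⊆ D) :
    ContDiff ℝ 1 (fun x : EuclideanSpace ℝ (Fin 3) =>
      ∫ y, k * Real.exp (-lam * ‖x - y‖) / ‖x - y‖ * v y) ∧
    (∀ x : EuclideanSpace ℝ (Fin 3),
      gradient (fun x' : EuclideanSpace ℝ (Fin 3) =>
          ∫ y, k * Real.exp (-lam * ‖x' - y‖) / ‖x' - y‖ * v y) x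
        = ∫ y, (-(k * Real.exp (-lam * ‖x - y‖) * (1 + lam * ‖x - y‖) / ‖x - y‖ ^ 3)
            * v y) • (x - y)) ∧
    ∀ x : EuclideanSpace ℝ (Fin 3),
      ‖gradient (fun x' : EuclideanSpace ℝ (Fin 3) =>
          ∫ y, k * Real.exp (-lam * ‖x' - y‖) / ‖x' - y‖ * v y) x‖
        ≤ 8 * Real.pi * k / lam * M := by
  have hvi : Integrable v := by
    obtain ⟨R, hR⟩ := hD.subset_closedBall 0
    rw [← integrableOn_iff_integrable_of_support_subset (hsupp.trans hR)]
    exact Measure.integrableOn_of_bounded (M := M) measure_closedBall_lt_top.ne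
      hv.aestronglyMeasurable (Filter.Eventually.of_forall hM)
  obtain ⟨hc, hd⟩ := yk_main hk hlam hv hM hvi
  have eH : ∀ x : EuclideanSpace ℝ (Fin 3), (∫ y, v y • ykH k lam 0 (x - y)) =
      ∫ y, (-(k * Real.exp (-lam * ‖x - y‖) * (1 + lam * ‖x - y‖) / ‖x - y‖ ^ 3)
            * v y) • (x - y) := by
    intro x
    congr 1
    funext y
    rw [ykH, ykS_zero, smul_smul, mul_comm]
  simp only [ykG, ykS_zero] at hd
  have hg : ∀ x, gradient (fun x' : EuclideanSpace ℝ (Fin 3) =>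
          ∫ y, k * Real.exp (-lam * ‖x' - y‖) / ‖x' - y‖ * v y) x =
          ∫ y, v y • ykH k lam 0 (x - y) := fun x =>
    HasGradientAt.gradient (hasGradientAt_iff_hasFDerivAt.2 (hd x))
  refine ⟨contDiff_one_iff_hasFDerivAt.2 ⟨_, (innerSL ℝ).continuous.comp hc, hd⟩, fun x => ?_,
    fun x => ?_⟩
  · rw [hg, eH]
  · rw [hg]
    exact yk_bound hk hlam hM 0 x
end

section
/- Let k, λ > 0 and let v : ℝ³ → ℝ be smooth with compact support. Then the Yukawa potential w(x) := ∫_{ℝ³} k·e^{−λ‖x−y‖}/‖x−y‖ · v(y) dy is smooth on ℝ³ and satisfies λ²·w(x) − Δw(x) = 4πk·v(x) for every x ∈ ℝ³, where Δ denotes the Laplacian (the sum of the second partial derivatives). Equivalently, the Yukawa kernel G(·; k, λ) is the fundamental solution of the elliptic operator Λ = (1/(4πk))(λ²I − Δ). -/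
open MeasureTheory

/-- The Laplacian of `f : ℝ³ → ℝ`, defined as the sum of the second partial
derivatives in the standard coordinate directions. -/
noncomputable def laplacian (f : EuclideanSpace ℝ (Fin 3) → ℝ)
    (x : EuclideanSpace ℝ (Fin 3)) : ℝ :=
  ∑ i : Fin 3,
    fderiv ℝ (fun z => fderiv ℝ f z (EuclideanSpace.single i (1 : ℝ))) x
      (EuclideanSpace.single i (1 : ℝ))

namespace Yuk
open Filter Topology Set


local notation "E3" => EuclideanSpace ℝ (Fin 3)

noncomputable def ev (i : Fin 3) : E3 := EuclideanSpace.single i (1 : ℝ)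

noncomputable def pd (i : Fin 3) (u : E3 → ℝ) : E3 → ℝ := fun a => fderiv ℝ u a (ev i)

noncomputable def cv (A u : E3 → ℝ) (x : E3) : ℝ := ∫ t, A t * u (x - t)

noncomputable def yk (lam : ℝ) (t : E3) : ℝ := Real.exp (-lam * ‖t‖) / ‖t‖

noncomputable def sg (e : ℝ) (t : E3) : ℝ := Real.sqrt (e ^ 2 + ‖t‖ ^ 2)

noncomputable def yke (lam e : ℝ) (t : E3) : ℝ := Real.exp (-lam * sg e t) / sg e t

lemma yk_integrable (lam : ℝ) (h : 0 < lam) : Integrable (yk lam) := by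
  have := (integrable_fun_norm_addHaar (volume : Measure E3)
    (f := fun r : ℝ => Real.exp (-lam * r) / r)).2 ?_
  · exact this
  · have h2 := integrableOn_rpow_mul_exp_neg_mul_rpow (s := 1) (p := 1) (by norm_num) (by norm_num) h
    refine h2.congr_fun (fun x hx => ?_) measurableSet_Ioi
    have hx : 0 < x := hx
    simp
    field_simp

lemma pd_contDiff (i : Fin 3) {u : E3 → ℝ} (hu : ContDiff ℝ (⊤ : ℕ∞) u) :
    ContDiff ℝ (⊤ : ℕ∞) (pd i u) := by
  unfold pd
  exact (hu.fderiv_right (m := (⊤ : ℕ∞)) (by simp)).clm_apply contDiff_const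

lemma pd_supp (i : Fin 3) {u : E3 → ℝ} (hu : HasCompactSupport u) :
    HasCompactSupport (pd i u) := 
  hu.fderiv_apply ℝ (ev i)

lemma cv_eq (A u : E3 → ℝ) : cv A u = convolution A u (ContinuousLinearMap.mul ℝ ℝ) volume := by
  ext x; simp [cv, convolution]

lemma cv_contDiff {A u : E3 → ℝ} (hA : LocallyIntegrable A) (hu : ContDiff ℝ (⊤ : ℕ∞) u)
    (hc : HasCompactSupport u) : ContDiff ℝ (⊤ : ℕ∞) (cv A u) := by
  rw [cv_eq]
  exact hc.contDiff_convolution_right _ hA hu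

lemma cv_int {A u : E3 → ℝ} (hA : LocallyIntegrable A) (hu : Continuous u)
    (hc : HasCompactSupport u) (x : E3) : Integrable (fun t => A t * u (x - t)) := by
  have := hc.convolutionExists_right (ContinuousLinearMap.mul ℝ ℝ) hA hu x
  simpa [ConvolutionExistsAt] using this

lemma pd_cv (i : Fin 3) {A u : E3 → ℝ} (hA : LocallyIntegrable A) (hu : ContDiff ℝ (⊤ : ℕ∞) u)
    (hc : HasCompactSupport u) : pd i (cv A u) = cv A (pd i u) := by
  ext x
  have h1 : ContDiff ℝ 1 u := hu.of_le (by simp)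
  have := hc.hasFDerivAt_convolution_right (ContinuousLinearMap.mul ℝ ℝ) hA h1 x
  rw [pd, cv_eq, this.fderiv, convolution_precompR_apply _ hA (hc.fderiv ℝ) (h1.continuous_fderiv one_ne_zero),
    cv_eq]
  rfl

lemma pd_reflect (i : Fin 3) {u : E3 → ℝ} (hu : ContDiff ℝ (⊤ : ℕ∞) u) (x t : E3) :
    fderiv ℝ (fun t => u (x - t)) t (ev i) = - pd i u (x - t) := by
  have h1 : HasFDerivAt u (fderiv ℝ u (x - t)) (x - t) :=
    (hu.differentiable (by simp) _).hasFDerivAt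
  have h2 : HasFDerivAt (fun t : E3 => x - t) (-ContinuousLinearMap.id ℝ E3) t :=
    (hasFDerivAt_id t).const_sub x
  have h3 := h1.comp t h2
  have h4 : fderiv ℝ (fun t => u (x - t)) t = _ := h3.fderiv
  rw [h4]
  simp [pd]

lemma cv_ibp (i : Fin 3) {A u : E3 → ℝ} (hA : ContDiff ℝ (⊤ : ℕ∞) A) (hu : ContDiff ℝ (⊤ : ℕ∞) u)
    (hc : HasCompactSupport u) (x : E3) : cv A (pd i u) x = cv (pd i A) u x := by
  have hd : Differentiable ℝ (fun t => u (x - t)) :=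
    (hu.differentiable (by simp)).comp (by fun_prop)
  have key := integral_mul_fderiv_eq_neg_fderiv_mul_of_integrable (μ := (volume : Measure E3))
    (f := A) (g := fun t => u (x - t)) (v := ev i)
    (cv_int (A := pd i A) (pd_contDiff i hA).continuous.locallyIntegrable hu.continuous hc x)
    (by
      simp_rw [pd_reflect i hu]
      simpa using (cv_int hA.continuous.locallyIntegrable (pd_contDiff i hu).continuous
        (pd_supp i hc) x).neg)
    (cv_int hA.continuous.locallyIntegrable hu.continuous hc x)
    (fun y _ => hA.differentiable (by simp) y) (fun y _ => hd y)
  simp_rw [pd_reflect i hu] at key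
  simp only [mul_neg, integral_neg, neg_inj] at key
  exact key

lemma sg_pos {e : ℝ} (he : 0 < e) (t : E3) : 0 < sg e t := by
  unfold sg; positivity

lemma sg_sq {e : ℝ} (t : E3) : sg e t ^ 2 = e ^ 2 + ‖t‖ ^ 2 := by
  unfold sg; exact Real.sq_sqrt (by positivity)

lemma sg_contDiff {e : ℝ} (he : 0 < e) : ContDiff ℝ (⊤ : ℕ∞) (sg e) := by
  unfold sg
  exact (contDiff_const.add (contDiff_norm_sq ℝ)).sqrt (fun t => by positivity)

lemma yke_contDiff (lam : ℝ) {e : ℝ} (he : 0 < e) : ContDiff ℝ (⊤ : ℕ∞) (yke lam e) := by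
  unfold yke
  exact (contDiff_const.mul (sg_contDiff he)).exp.div (sg_contDiff he) (fun t => (sg_pos he t).ne')

lemma sg_hasFDeriv {e : ℝ} (he : 0 < e) (t : E3) :
    HasFDerivAt (sg e) ((sg e t)⁻¹ • innerSL ℝ t) t := by
  have h1 : HasFDerivAt (fun t : E3 => e ^ 2 + ‖t‖ ^ 2) (2 • innerSL ℝ t) t :=
    (hasStrictFDerivAt_norm_sq t).hasFDerivAt.const_add _
  have h2 := h1.sqrt (by positivity)
  refine h2.congr_fderiv ?_
  have := sg_pos he t
  ext y
  simp [sg]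
  ring

lemma pd_radial {e : ℝ} (he : 0 < e) {ψ : ℝ → ℝ} {d : ℝ} (t : E3)
    (h : HasDerivAt ψ d (sg e t)) : 
    HasFDerivAt (fun t => ψ (sg e t)) ((d * (sg e t)⁻¹) • innerSL ℝ t) t := by
  have := h.comp_hasFDerivAt t (sg_hasFDeriv he t)
  refine this.congr_fderiv ?_
  rw [smul_smul]

noncomputable def hh (lam s : ℝ) : ℝ := -(lam / s ^ 2 + 1 / s ^ 3) * Real.exp (-lam * s)
noncomputable def hp (lam s : ℝ) : ℝ :=
  (lam ^ 2 / s ^ 2 + 3 * lam / s ^ 3 + 3 / s ^ 4) * Real.exp (-lam * s)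

lemma gg_deriv (lam s : ℝ) (hs : 0 < s) :
    HasDerivAt (fun s => Real.exp (-lam * s) / s) (s * hh lam s) s := by
  have h0 : HasDerivAt (fun s : ℝ => Real.exp (-lam * s)) (Real.exp (-lam * s) * (-lam * 1)) s :=
    ((hasDerivAt_id s).const_mul (-lam)).exp
  refine (h0.div (hasDerivAt_id s) hs.ne').congr_deriv ?_
  simp only [id, hh]
  field_simp
  ring

lemma hh_deriv (lam s : ℝ) (hs : 0 < s) :
    HasDerivAt (hh lam) (hp lam s) s := by
  have h0 : HasDerivAt (fun s : ℝ => Real.exp (-lam * s)) (Real.exp (-lam * s) * (-lam * 1)) s :=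
    ((hasDerivAt_id s).const_mul (-lam)).exp
  have h1 := ((hasDerivAt_const s lam).div (hasDerivAt_pow 2 s) (by positivity))
  have h2 := ((hasDerivAt_const s (1:ℝ)).div (hasDerivAt_pow 3 s) (by positivity))
  refine ((h1.add h2).neg.mul h0).congr_deriv ?_
  simp only [hp, Pi.add_apply, Pi.neg_apply, Pi.div_apply]
  field_simp
  push_cast
  ring

lemma inner_ev (t : E3) (i : Fin 3) : innerSL ℝ t (ev i) = t i := by
  simp [ev, EuclideanSpace.inner_single_right]

lemma pd_yke (lam : ℝ) (i : Fin 3) {e : ℝ} (he : 0 < e) :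
    pd i (yke lam e) = fun t => hh lam (sg e t) * t i := by
  ext t
  have hs := sg_pos he t
  have h := pd_radial he t (gg_deriv lam (sg e t) hs)
  have h' : fderiv ℝ (yke lam e) t = _ := h.fderiv
  rw [pd, h']
  rw [smul_apply, inner_ev, smul_eq_mul]
  field_simp

lemma pd_pd_yke (lam : ℝ) (i : Fin 3) {e : ℝ} (he : 0 < e) (t : E3) :
    pd i (pd i (yke lam e)) t = hp lam (sg e t) / sg e t * t i ^ 2 + hh lam (sg e t) := by
  rw [pd_yke lam i he]
  have hs := sg_pos he t
  have h := pd_radial he t (hh_deriv lam (sg e t) hs)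
  have hc : HasFDerivAt (fun t : E3 => t i) (EuclideanSpace.proj i : E3 →L[ℝ] ℝ) t :=
    (EuclideanSpace.proj i : E3 →L[ℝ] ℝ).hasFDerivAt
  have h2 := h.mul hc
  have h' : fderiv ℝ (fun t : E3 => hh lam (sg e t) * t i) t = _ := h2.fderiv
  rw [pd, h']
  simp only [add_apply, smul_apply, inner_ev, smul_eq_mul]
  simp [ev]
  field_simp
  ring

lemma helm_yke (lam : ℝ) {e : ℝ} (he : 0 < e) (t : E3) :
    lam ^ 2 * yke lam e t - ∑ i, pd i (pd i (yke lam e)) t = e ^ 2 * (hp lam (sg e t) / sg e t) := by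
  have hs := sg_pos he t
  have hq := sg_sq (e := e) t
  rw [EuclideanSpace.norm_sq_eq] at hq
  simp only [pd_pd_yke lam _ he, Fin.sum_univ_three, Real.norm_eq_abs, sq_abs] at hq ⊢
  have : t 0 ^ 2 = sg e t ^ 2 - e ^ 2 - t 1 ^ 2 - t 2 ^ 2 := by linarith
  rw [this, yke, hh, hp]
  field_simp
  ring

lemma ratio_tendsto : Tendsto (fun r : ℝ => (r / Real.sqrt (1 ^ 2 + r ^ 2)) ^ 3 / 3) atTop (𝓝 (1 / 3)) := by
  have h : Tendsto (fun r : ℝ => r / Real.sqrt (1 ^ 2 + r ^ 2)) atTop (𝓝 1) := by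
    have h1 : Tendsto (fun r : ℝ => 1 - r⁻¹) atTop (𝓝 (1 - 0)) :=
      tendsto_const_nhds.sub tendsto_inv_atTop_zero
    rw [sub_zero] at h1
    refine tendsto_of_tendsto_of_tendsto_of_le_of_le' h1 tendsto_const_nhds ?_ ?_
    · filter_upwards [eventually_gt_atTop 0] with r hr
      have hs : Real.sqrt (1 ^ 2 + r ^ 2) ≤ 1 + r := by
        rw [Real.sqrt_le_left (by positivity)]; nlinarith
      have hp : 0 < Real.sqrt (1 ^ 2 + r ^ 2) := by positivity
      rw [le_div_iff₀ hp]
      by_cases h : 1 - r⁻¹ ≤ 0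
      · exact (mul_nonpos_of_nonpos_of_nonneg h hp.le).trans hr.le
      · push Not at h
        calc (1 - r⁻¹) * Real.sqrt (1 ^ 2 + r ^ 2) ≤ (1 - r⁻¹) * (1 + r) := by gcongr
          _ = r - r⁻¹ := by field_simp; ring
          _ ≤ r := by have : 0 < r⁻¹ := by positivity
                      linarith
    · filter_upwards [eventually_gt_atTop 0] with r hr
      have hp : 0 < Real.sqrt (1 ^ 2 + r ^ 2) := by positivity
      rw [div_le_one hp]
      exact Real.le_sqrt_of_sq_le (by nlinarith)
  have := (h.pow 3).div_const 3
  simpa using this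

lemma ratio_deriv (r : ℝ) : HasDerivAt (fun r : ℝ => (r / Real.sqrt (1 ^ 2 + r ^ 2)) ^ 3 / 3)
    (r ^ 2 * (1 / Real.sqrt (1 ^ 2 + r ^ 2) ^ 5)) r := by
  have h1 : HasDerivAt (fun r : ℝ => 1 ^ 2 + r ^ 2) (2 * r) r := by
    simpa using (hasDerivAt_pow 2 r).const_add (1 ^ 2 : ℝ)
  have h2 := h1.sqrt (by positivity)
  have hp : 0 < Real.sqrt (1 ^ 2 + r ^ 2) := by positivity
  have hq : Real.sqrt (1 ^ 2 + r ^ 2) ^ 2 = 1 ^ 2 + r ^ 2 := Real.sq_sqrt (by positivity)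
  refine ((((hasDerivAt_id r).div h2 hp.ne').pow 3).div_const 3).congr_deriv ?_
  simp only [id, Pi.div_apply]
  generalize Real.sqrt (1 ^ 2 + r ^ 2) = s at *
  have : r ^ 2 = s ^ 2 - 1 := by linarith
  have h3 : (1 * s - r * (2 * r / (2 * s))) = 1 / s := by
    field_simp
    linarith
  rw [h3]
  rw [show (3 - 1 : ℕ) = 2 from rfl, div_pow]
  field_simp
  norm_num
  ring

lemma J_integrable : Integrable (fun z : E3 => 1 / sg 1 z ^ 5) := by
  refine (integrable_fun_norm_addHaar (volume : Measure E3)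
    (f := fun r : ℝ => 1 / Real.sqrt (1 ^ 2 + r ^ 2) ^ 5)).2 ?_
  simp only [finrank_euclideanSpace, Fintype.card_fin, smul_eq_mul]
  exact integrableOn_Ioi_deriv_of_nonneg' (fun r _ => ratio_deriv r)
    (fun r _ => mul_nonneg (sq_nonneg r) (by positivity))
    ratio_tendsto

lemma J_integral : ∫ z : E3, 1 / sg 1 z ^ 5 = 4 * Real.pi / 3 := by
  have h := integral_fun_norm_addHaar (volume : Measure E3)
    (fun r : ℝ => 1 / Real.sqrt (1 ^ 2 + r ^ 2) ^ 5)
  simp only [finrank_euclideanSpace, Fintype.card_fin, smul_eq_mul] at h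
  have h' := integral_Ioi_of_hasDerivAt_of_nonneg' (a := 0) (fun r _ => ratio_deriv r)
    (fun r _ => by positivity) ratio_tendsto
  rw [show (3 - 1 : ℕ) = 2 from rfl, h'] at h
  refine h.trans ?_
  rw [measureReal_def, EuclideanSpace.volume_ball_fin_three]
  simp
  rw [ENNReal.toReal_ofReal (by positivity)]
  ring

lemma sg_smul {e : ℝ} (he : 0 < e) (z : E3) : sg e (e • z) = e * sg 1 z := by
  unfold sg
  rw [norm_smul, Real.norm_of_nonneg he.le,
    show e ^ 2 + (e * ‖z‖) ^ 2 = e ^ 2 * (1 ^ 2 + ‖z‖ ^ 2) by ring,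
    Real.sqrt_mul (by positivity), Real.sqrt_sq he.le]

lemma limA {lam : ℝ} (hl : 0 < lam) {u : E3 → ℝ} (hu : Continuous u)
    (hc : HasCompactSupport u) (x : E3) :
    Tendsto (fun e => cv (yke lam e) u x) (𝓝[>] 0) (𝓝 (cv (yk lam) u x)) := by
  unfold cv
  have hI := cv_int (yk_integrable lam hl).locallyIntegrable hu hc x
  refine tendsto_integral_filter_of_dominated_convergence
    (fun t => ‖yk lam t * u (x - t)‖) ?_ ?_ hI.norm ?_
  · filter_upwards [self_mem_nhdsWithin] with e he
    have he : 0 < e := he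
    exact ((yke_contDiff lam he).continuous.mul (hu.comp (by fun_prop))).aestronglyMeasurable
  · filter_upwards [self_mem_nhdsWithin] with e he
    have he : 0 < e := he
    filter_upwards [compl_mem_ae_iff.2 (measure_singleton (0 : E3))] with t ht
    have ht : t ≠ 0 := ht
    have hn : 0 < ‖t‖ := norm_pos_iff.2 ht
    have hs := sg_pos he t
    have hle : ‖t‖ ≤ sg e t := Real.le_sqrt_of_sq_le (by nlinarith)
    rw [norm_mul, norm_mul]
    gcongr
    unfold yke yk
    rw [Real.norm_of_nonneg (by positivity), Real.norm_of_nonneg (by positivity)]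
    gcongr ?_ / ?_
    apply Real.exp_le_exp.2
    nlinarith
  · filter_upwards [compl_mem_ae_iff.2 (measure_singleton (0 : E3))] with t ht
    have ht : t ≠ 0 := ht
    have hn : 0 < ‖t‖ := norm_pos_iff.2 ht
    have h0 : sg 0 t = ‖t‖ := by simp [sg]
    have hs : Tendsto (fun e => sg e t) (𝓝[>] 0) (𝓝 ‖t‖) := by
      have : Continuous (fun e => sg e t) := by unfold sg; fun_prop
      have := this.tendsto 0
      rw [h0] at this
      exact this.mono_left nhdsWithin_le_nhds
    refine Tendsto.mul ?_ tendsto_const_nhds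
    unfold yke yk
    refine Tendsto.div ?_ hs hn.ne'
    exact (Real.continuous_exp.tendsto _).comp (hs.const_mul _)

lemma limB {lam : ℝ} (hl : 0 < lam) {u : E3 → ℝ} (hu : Continuous u)
    (hc : HasCompactSupport u) (x : E3) :
    Tendsto (fun e => cv (fun t => e ^ 2 * (hp lam (sg e t) / sg e t)) u x) (𝓝[>] 0)
      (𝓝 (4 * Real.pi * u x)) := by
  obtain ⟨C, hC⟩ := hc.exists_bound_of_continuous hu
  have hC0 : 0 ≤ C := (norm_nonneg _).trans (hC 0)
  have hsc : Continuous (sg 1) := (sg_contDiff one_pos).continuous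
  let f : ℝ → E3 → ℝ := fun e z => (lam ^ 2 * e ^ 2 / sg 1 z ^ 3 + 3 * lam * e / sg 1 z ^ 4
    + 3 / sg 1 z ^ 5) * Real.exp (-lam * (e * sg 1 z)) * u (x - e • z)
  have hf : ∀ e, Continuous (f e) := by
    intro e
    have h := fun z => (sg_pos one_pos z).ne'
    have hu' : Continuous fun z : E3 => u (x - e • z) := hu.comp (by fun_prop)
    refine Continuous.mul (Continuous.mul ?_ (by fun_prop)) hu'
    refine ((Continuous.div ?_ ?_ ?_).add (Continuous.div ?_ ?_ ?_)).add (Continuous.div ?_ ?_ ?_)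
    all_goals first | fun_prop | exact fun z => pow_ne_zero _ (h z)
  have key : Tendsto (fun e => ∫ z, f e z) (𝓝[>] 0) (𝓝 (∫ z, f 0 z)) := by
    refine tendsto_integral_filter_of_dominated_convergence
      (fun z => 8 * C * (1 / sg 1 z ^ 5)) ?_ ?_ (J_integrable.const_mul _) ?_
    · exact Eventually.of_forall fun e => (hf e).aestronglyMeasurable
    · filter_upwards [self_mem_nhdsWithin] with e he
      have he : 0 < e := he
      refine Eventually.of_forall fun z => ?_
      have hs := sg_pos one_pos z
      simp only [f]
      rw [norm_mul, Real.norm_of_nonneg (by positivity)]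
      have h1 : (lam ^ 2 * e ^ 2 / sg 1 z ^ 3 + 3 * lam * e / sg 1 z ^ 4
        + 3 / sg 1 z ^ 5) * Real.exp (-lam * (e * sg 1 z)) ≤ 8 * (1 / sg 1 z ^ 5) := by
        set a := lam * (e * sg 1 z) with ha
        have ha0 : 0 < a := by positivity
        have : lam ^ 2 * e ^ 2 / sg 1 z ^ 3 + 3 * lam * e / sg 1 z ^ 4
          + 3 / sg 1 z ^ 5 = (a ^ 2 + 3 * a + 3) * (1 / sg 1 z ^ 5) := by
          rw [ha]; field_simp
        rw [this, neg_mul, ← ha, mul_right_comm]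
        gcongr
        rw [Real.exp_neg, ← div_eq_mul_inv, div_le_iff₀ (Real.exp_pos _)]
        have := Real.quadratic_le_exp_of_nonneg ha0.le
        nlinarith
      calc _ ≤ 8 * (1 / sg 1 z ^ 5) * C := by
            gcongr
            exact hC _
        _ = _ := by ring
    · refine Eventually.of_forall fun z => ?_
      have : Continuous fun e => f e z := by
        have hu' : Continuous fun e : ℝ => u (x - e • z) := hu.comp (by fun_prop)
        simp only [f]
        refine Continuous.mul ?_ hu'
        fun_prop
      exact (this.tendsto 0).mono_left nhdsWithin_le_nhds
  have h0 : ∫ z, f 0 z = 4 * Real.pi * u x := by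
    have : f 0 = fun z => (3 * u x) * (1 / sg 1 z ^ 5) := by
      ext z; simp [f]; ring
    rw [this, integral_const_mul, J_integral]; ring
  rw [h0] at key
  refine key.congr' ?_
  filter_upwards [self_mem_nhdsWithin] with e he
  have he : 0 < e := he
  have := Measure.integral_comp_smul (volume : Measure E3)
    (fun t => e ^ 2 * (hp lam (sg e t) / sg e t) * u (x - t)) e
  simp only [finrank_euclideanSpace, Fintype.card_fin, smul_eq_mul] at this
  rw [abs_of_pos (by positivity), eq_comm, inv_mul_eq_iff_eq_mul₀ (by positivity),
    ← integral_const_mul] at this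
  rw [cv, this]
  congr 1
  ext z
  have hs := sg_pos one_pos z
  simp only [f, sg_smul he, hp]
  field_simp

lemma cv_helm {lam : ℝ} {A u : E3 → ℝ} (hA : LocallyIntegrable A) {B : Fin 3 → E3 → ℝ}
    (hB : ∀ i, LocallyIntegrable (B i)) (hu : Continuous u)
    (hc : HasCompactSupport u) (x : E3) :
    lam ^ 2 * cv A u x - ∑ i, cv (B i) u x = cv (fun t => lam ^ 2 * A t - ∑ i, B i t) u x := by
  unfold cv
  rw [← integral_finsetSum _ (fun i _ => cv_int (hB i) hu hc x), ← integral_const_mul,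
    ← integral_sub ((cv_int hA hu hc x).const_mul _)
      (integrable_finsetSum _ fun i _ => cv_int (hB i) hu hc x)]
  congr 1
  ext t
  rw [sub_mul, Finset.sum_mul]
  ring

lemma main {lam : ℝ} (hl : 0 < lam) {u : E3 → ℝ} (hu : ContDiff ℝ (⊤ : ℕ∞) u)
    (hc : HasCompactSupport u) (x : E3) :
    lam ^ 2 * cv (yk lam) u x - laplacian (cv (yk lam) u) x = 4 * Real.pi * u x := by
  have hli := (yk_integrable lam hl).locallyIntegrable
  have hL : laplacian (cv (yk lam) u) x = ∑ i, cv (yk lam) (pd i (pd i u)) x := by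
    change ∑ i, pd i (pd i (cv (yk lam) u)) x = _
    refine Finset.sum_congr rfl fun i _ => ?_
    rw [pd_cv i hli hu hc, pd_cv i hli (pd_contDiff i hu) (pd_supp i hc)]
  rw [hL]
  refine tendsto_nhds_unique (f := fun e => lam ^ 2 * cv (yke lam e) u x
    - ∑ i, cv (yke lam e) (pd i (pd i u)) x) (l := 𝓝[>] 0) ?_ ?_
  · exact ((limA hl hu.continuous hc x).const_mul _).sub (tendsto_finsetSum _ fun i _ =>
      limA hl (pd_contDiff i (pd_contDiff i hu)).continuous (pd_supp i (pd_supp i hc)) x)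
  · refine (limB hl hu.continuous hc x).congr' ?_
    filter_upwards [self_mem_nhdsWithin] with e he
    have he : 0 < e := he
    have hy := yke_contDiff lam he
    have : ∀ i, cv (yke lam e) (pd i (pd i u)) x = cv (pd i (pd i (yke lam e))) u x := fun i => by
      rw [cv_ibp i hy (pd_contDiff i hu) (pd_supp i hc), cv_ibp i (pd_contDiff i hy) hu hc]
    simp_rw [this]
    rw [cv_helm hy.continuous.locallyIntegrable
      (fun i => (pd_contDiff i (pd_contDiff i hy)).continuous.locallyIntegrable) hu.continuous hc]
    simp_rw [helm_yke lam he]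

lemma pot_eq (k lam : ℝ) (v : E3 → ℝ) :
    (fun x : E3 => ∫ y, k * Real.exp (-lam * ‖x - y‖) / ‖x - y‖ * v y)
      = cv (yk lam) (fun y => k * v y) := by
  rw [cv_eq]
  ext x
  rw [convolution_eq_swap]
  congr 1
  ext y
  simp [yk]
  ring

end Yuk

/-- For `k, λ > 0` and `v` smooth with compact support, the Yukawa potential
`w(x) = ∫ k e^{−λ‖x−y‖}/‖x−y‖ · v(y) dy` is smooth and satisfies
`λ² w − Δw = 4πk v`; i.e. the Yukawa kernel is the fundamental solution of
`(1/(4πk))(λ² I − Δ)`. -/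
theorem yukawa_fundamental_solution (k lam : ℝ) (hk : 0 < k) (hlam : 0 < lam)
    (v : EuclideanSpace ℝ (Fin 3) → ℝ)
    (hv : ContDiff ℝ (⊤ : ℕ∞) v) (hvsupp : HasCompactSupport v) :
    ContDiff ℝ (⊤ : ℕ∞) (fun x : EuclideanSpace ℝ (Fin 3) =>
      ∫ y, k * Real.exp (-lam * ‖x - y‖) / ‖x - y‖ * v y) ∧
    ∀ x : EuclideanSpace ℝ (Fin 3),
      lam ^ 2 * (∫ y, k * Real.exp (-lam * ‖x - y‖) / ‖x - y‖ * v y)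
        - laplacian (fun x' : EuclideanSpace ℝ (Fin 3) =>
            ∫ y, k * Real.exp (-lam * ‖x' - y‖) / ‖x' - y‖ * v y) x
        = 4 * Real.pi * k * v x := by
  have h1 : ContDiff ℝ (⊤ : ℕ∞) (fun y => k * v y) := contDiff_const.mul hv
  have h2 : HasCompactSupport (fun y => k * v y) := hvsupp.mul_left
  have hp := Yuk.pot_eq k lam v
  rw [hp]
  refine ⟨Yuk.cv_contDiff (Yuk.yk_integrable lam hlam).locallyIntegrable h1 h2, fun x => ?_⟩
  have hx := congrFun hp x
  rw [hx, Yuk.main hlam h1 h2]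
  ring
end
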